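/- arXiv:1802.06699 — 2 statements merged into one kernel-verified Lean document; each statement's English description precedes it below -/
import Mathlib

section
/- For all reals x > 0 and y > 0, the unique point where the closed segment from A = (−x, 1) to B = (1, −y) meets the vertical line {p ∈ ℝ × ℝ : p.1 = 0} has nonnegative second coordinate if and only if x·y ≤ 1, and has nonpositive second coordinate if and only if x·y ≥ 1. Equivalently, the segment from A to B is disjoint from the open downward ray {(0, s) : s < 0} if and only if x·y ≤ 1, and is disjoint from the open upward ray {(0, s) : s > 0} if and only if x·y ≥ 1. -/
/-!
The segment from `(-x, 1)` to `(1, -y)` crosses the vertical axis exactly once, at the parameter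
`t = x / (1 + x)`, hence at height `(1 - x * y) / (1 + x)` (`mem_segment_and_fst_eq_zero_iff`).
As `1 + x > 0`, the sign of this height is the sign of `1 - x * y`, and the segment avoids a part
of the axis iff this single crossing point does.
-/

theorem mem_segment_and_fst_eq_zero_iff {x : ℝ} (y : ℝ) (hx : 0 < x) (p : ℝ × ℝ) :
    (p ∈ segment ℝ ((-x, 1) : ℝ × ℝ) ((1, -y) : ℝ × ℝ) ∧ p.1 = 0) ↔
      p = (0, (1 - x * y) / (1 + x)) := by
  have h1 : 0 < 1 + x := by linarith
  constructor
  · rintro ⟨⟨a, b, ha, hb, hab, rfl⟩, h⟩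
    simp only [Prod.fst_add, Prod.smul_fst, smul_eq_mul] at h
    ext
    · simpa using h
    · simp only [Prod.snd_add, Prod.smul_snd, smul_eq_mul]
      rw [eq_div_iff h1.ne']
      -- The crossing condition determines the weights: `a * (1 + x) = 1` and `b * (1 + x) = x`.
      linear_combination (1 + x * (-y)) * hab - (1 + y) * h
  · rintro rfl
    refine ⟨⟨1 / (1 + x), x / (1 + x), by positivity, by positivity, by field_simp, ?_⟩, rfl⟩
    ext
    · simp only [Prod.fst_add, Prod.smul_fst, smul_eq_mul]
      field_simp
      ring
    · simp only [Prod.snd_add, Prod.smul_snd, smul_eq_mul]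
      field_simp
      ring

/-- The segment avoids a part of the vertical axis, cut out by a condition `P` on the height,
iff its unique crossing point does. -/
theorem disjoint_segment_axis_iff {x : ℝ} (y : ℝ) (hx : 0 < x) (P : ℝ → Prop) :
    Disjoint (segment ℝ ((-x, 1) : ℝ × ℝ) ((1, -y) : ℝ × ℝ)) {p : ℝ × ℝ | p.1 = 0 ∧ P p.2} ↔
      ¬ P ((1 - x * y) / (1 + x)) := by
  rw [Set.disjoint_left]
  constructor
  · intro h hP
    have hm := (mem_segment_and_fst_eq_zero_iff y hx _).2 rfl
    exact h hm.1 ⟨hm.2, hP⟩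
  · rintro h p hp ⟨h0, hP⟩
    rw [(mem_segment_and_fst_eq_zero_iff y hx p).1 ⟨hp, h0⟩] at hP
    exact h hP

/-- For all reals `x > 0` and `y > 0`, the unique point where the closed segment from
`A = (-x, 1)` to `B = (1, -y)` meets the vertical line `{p | p.1 = 0}`, namely
`(0, (1 - x*y)/(1 + x))`, has nonnegative second coordinate iff `x*y ≤ 1`, and nonpositive
second coordinate iff `x*y ≥ 1`.  Equivalently, the segment is disjoint from the open
downward ray `{(0, s) : s < 0}` iff `x*y ≤ 1`, and disjoint from the open upward ray
`{(0, s) : s > 0}` iff `x*y ≥ 1`. -/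
theorem inversion_gadget_correctness (x y : ℝ) (hx : 0 < x) (hy : 0 < y) :
    ((0 : ℝ) ≤ (1 - x * y) / (1 + x) ↔ x * y ≤ 1) ∧
    ((1 - x * y) / (1 + x) ≤ 0 ↔ 1 ≤ x * y) ∧
    (Disjoint (segment ℝ ((-x, 1) : ℝ × ℝ) ((1, -y) : ℝ × ℝ))
        {p : ℝ × ℝ | p.1 = 0 ∧ p.2 < 0} ↔ x * y ≤ 1) ∧
    (Disjoint (segment ℝ ((-x, 1) : ℝ × ℝ) ((1, -y) : ℝ × ℝ))
        {p : ℝ × ℝ | p.1 = 0 ∧ 0 < p.2} ↔ 1 ≤ x * y) := by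
  have h1 : 0 < 1 + x := by linarith
  have hnonneg : (0 : ℝ) ≤ (1 - x * y) / (1 + x) ↔ x * y ≤ 1 := by
    rw [le_div_iff₀ h1, zero_mul, sub_nonneg]
  have hnonpos : (1 - x * y) / (1 + x) ≤ 0 ↔ 1 ≤ x * y := by
    rw [div_le_iff₀ h1, zero_mul, sub_nonpos]
  refine ⟨hnonneg, hnonpos, ?_, ?_⟩
  · rw [disjoint_segment_axis_iff y hx (fun s => s < 0), not_lt, hnonneg]
  · rw [disjoint_segment_axis_iff y hx (fun s => 0 < s), not_lt, hnonpos]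
end

section
/- Correctness of the copy (one-sided) gadget: let d > 0 and let a, b ∈ [0, 7/2]; encode the variable values x = 1/2 + a (increasing upward on the left segment) and x' = 4 − b (increasing downward on the right segment). Then the closed segment from (0, a) to (d, b) is disjoint from the open upward vertical ray {(d/2, s) : s > 7/4} if and only if x ≤ x'. -/
/-- Correctness of the one-sided copy gadget: let `d > 0` and `a, b ∈ [0, 7/2]`; encode
`x = 1/2 + a` (increasing upward on the left segment) and `x' = 4 - b` (increasing
downward on the right segment).  Then the closed segment from `(0, a)` to `(d, b)` is
disjoint from the open upward vertical ray `{(d/2, s) : s > 7/4}` iff `x ≤ x'`. -/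
theorem copy_gadget_correctness (d a b : ℝ) (hd : 0 < d)
    (ha : a ∈ Set.Icc (0 : ℝ) (7 / 2)) (hb : b ∈ Set.Icc (0 : ℝ) (7 / 2)) :
    Disjoint (segment ℝ ((0, a) : ℝ × ℝ) ((d, b) : ℝ × ℝ))
        {p : ℝ × ℝ | p.1 = d / 2 ∧ 7 / 4 < p.2} ↔
      1 / 2 + a ≤ 4 - b := by
  rw [Set.disjoint_left]
  constructor
  · intro h
    by_contra! hlt
    -- The midpoint `(d / 2, (a + b) / 2)` lies on the ray as soon as `a + b > 7 / 2`.
    refine h (a := (d / 2, (a + b) / 2)) ⟨1 / 2, 1 / 2, by norm_num, by norm_num, by norm_num, ?_⟩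
      ⟨rfl, ?_⟩
    · ext <;> simp <;> ring
    · change 7 / 4 < (a + b) / 2
      linarith
  · rintro h _ ⟨u, v, -, -, huv, rfl⟩ ⟨h1, h2⟩
    simp only [Prod.smul_mk, Prod.mk_add_mk, smul_eq_mul] at h1 h2
    -- As `d ≠ 0`, the midpoint is the only point of the segment with first coordinate `d / 2`.
    have hv : v = 1 / 2 := mul_right_cancel₀ hd.ne' (by linarith)
    have hu : u = 1 / 2 := by linarith
    subst hv hu
    linarith
end
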